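/- For every station k, every t, every fixed strategy γ^{-k} of the other stations, and any two strategies γ^k and γ̃^k of station k, if the realization I_t^k = i_t^k has positive probability under both (γ^k, γ^{-k}) and (γ̃^k, γ^{-k}), then ℙ^{γ^k,γ^{-k}}(X_t = x_t, Λ_t^{-k} = λ_t^{-k} | I_t^k = i_t^k) = ℙ^{γ̃^k,γ^{-k}}(X_t = x_t, Λ_t^{-k} = λ_t^{-k} | I_t^k = i_t^k) for all (x_t, λ_t^{-k}); i.e., the kth private posterior Ξ_t^k[i_t^k] depends on the realized actions u_{1,t}^k contained in i_t^k but not on the strategy γ^k that generated them. -/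

import Mathlib

/-!
Decentralized stochastic network with `T`-step delayed sharing information patterns
(canonical finite-path-space formalization).

Times are 0-based: the paper's horizon `{1,…,n}` is encoded as `{0,…,n}` here
(so the paper's terminal time `n` is `n`, and paper time `t` corresponds to index `t-1`).

The sample space is the (finite) space of state/observation trajectories; given a
strategy profile the actions are determined recursively, and the probability of a
trajectory is the product of the Markovian kernels.  All posteriors (the private
posterior `Ξ` and the centralized posteriors `Π`, `Θ`) are elementary conditional
probabilities on this finite space.
-/

open Finset
open scoped BigOperators Classical

namespace DelayedSharing

/-- Canonical sample space: trajectories of states and observations over times `0,…,n`. -/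
abbrev Traj (n : ℕ) (X : Type) {K : ℕ} (Y : Fin K → Type) : Type :=
  (Fin (n + 1) → X) × (Fin (n + 1) → ∀ k, Y k)

/-- Clamped index into the horizon `{0,…,n}`. -/
def idx (n t : ℕ) : Fin (n + 1) := ⟨min t n, Nat.lt_succ_of_le (Nat.min_le_right t n)⟩

/-- A strategy profile: station `k`'s map, at each time, from full observation/action
histories to an action in the action space `U k`.  Admissibility (below) restricts the
dependence to the `T`-step delayed sharing information pattern `I_t^k`. -/
abbrev Strat {K : ℕ} (Y U : Fin K → Type) : Type :=
  ∀ k : Fin K, ℕ → (ℕ → ∀ j, Y j) → (ℕ → ∀ j, U j) → U k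

/-- A strategy of the single station `k`. -/
abbrev SStrat {K : ℕ} (Y U : Fin K → Type) (k : Fin K) : Type :=
  ℕ → (ℕ → ∀ j, Y j) → (ℕ → ∀ j, U j) → U k

variable {X : Type} {K : ℕ} {Y U : Fin K → Type}

def stateAt {n : ℕ} (ω : Traj n X Y) (t : ℕ) : X := ω.1 (idx n t)

def obsAt {n : ℕ} (ω : Traj n X Y) (t : ℕ) (k : Fin K) : Y k := ω.2 (idx n t) k

/-- `γ` is admissible for the `T`-step delayed sharing pattern: `γ k t` depends only on
`I_t^k = {Δ_t^{(K)}, Λ_t^k}`, i.e. on all stations' observations/actions up to time `t-T`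
(0-based: times `s` with `s + T ≤ t`), own observations up to `t` and own actions up to
`t-1`. -/
def Admissible (T : ℕ) (γ : Strat Y U) : Prop :=
  ∀ (k : Fin K) (t : ℕ) (y y' : ℕ → ∀ j, Y j) (u u' : ℕ → ∀ j, U j),
    (∀ s j, s + T ≤ t → y s j = y' s j) →
    (∀ s j, s + T ≤ t → u s j = u' s j) →
    (∀ s, s ≤ t → y s k = y' s k) →
    (∀ s, s < t → u s k = u' s k) →
    γ k t y u = γ k t y' u'

/-- Admissibility of a single station's strategy. -/
def SAdmissible (T : ℕ) (k : Fin K) (g : SStrat Y U k) : Prop :=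
  ∀ (t : ℕ) (y y' : ℕ → ∀ j, Y j) (u u' : ℕ → ∀ j, U j),
    (∀ s j, s + T ≤ t → y s j = y' s j) →
    (∀ s j, s + T ≤ t → u s j = u' s j) →
    (∀ s, s ≤ t → y s k = y' s k) →
    (∀ s, s < t → u s k = u' s k) →
    g t y u = g t y' u'

/-- Replace station `k`'s strategy in the profile `γ` by `g`. -/
def updStrat (γ : Strat Y U) (k : Fin K) (g : SStrat Y U k) : Strat Y U :=
  fun j => if h : j = k then (by subst h; exact g) else γ j

/-- Station `k` uses `g₁` before time `t` and `g₂` from time `t` on. -/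
def splice {k : Fin K} (g₁ g₂ : SStrat Y U k) (t : ℕ) : SStrat Y U k :=
  fun τ => if τ < t then g₁ τ else g₂ τ

variable [∀ k, Nonempty (U k)]

/-- The actions at times `< t` generated recursively by the strategy profile `γ` from the
observation path `y`. -/
noncomputable def actUpto (γ : Strat Y U) (y : ℕ → ∀ j, Y j) : ℕ → ℕ → ∀ j, U j
  | 0 => fun _ j => Classical.arbitrary (U j)
  | t + 1 => fun s => if s = t then (fun j => γ j t y (actUpto γ y t)) else actUpto γ y t s

/-- The action profile at time `t` generated by `γ` from the observation path `y`. -/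
noncomputable def act (γ : Strat Y U) (y : ℕ → ∀ j, Y j) (t : ℕ) : ∀ j, U j :=
  fun j => γ j t y (actUpto γ y t)

/-- The realized action profile along a trajectory. -/
noncomputable def actAt {n : ℕ} (γ : Strat Y U) (ω : Traj n X Y) (t : ℕ) : ∀ j, U j :=
  act γ (fun s => ω.2 (idx n s)) t

/-- The Markovian kernels and the per-stage cost of the decentralized network (0-based):
`prior` is the PMF of the initial state; `obs0 k` the PMF of station `k`'s initial
observation given the initial state; `trans t` the transition PMF from time `t` to `t+1`
given the action profile at time `t`; `obs t k` the PMF of station `k`'s observation at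
time `t+1` given the state at `t+1` and the action profile at time `t` (the observations
of the stations being conditionally independent given these); `cost t` the per-stage
cost `ℓ(t,·,·)`. -/
structure Kernels (X : Type) {K : ℕ} (Y U : Fin K → Type) where
  prior : X → ℝ
  obs0 : ∀ k : Fin K, X → Y k → ℝ
  trans : ℕ → X → (∀ j, U j) → X → ℝ
  obs : ℕ → ∀ k : Fin K, X → (∀ j, U j) → Y k → ℝ
  cost : ℕ → X → (∀ j, U j) → ℝ

variable [Fintype X] [∀ k, Fintype (Y k)]

/-- All the kernels are genuine probability mass functions. -/
def Kernels.IsPMF (M : Kernels X Y U) : Prop :=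
  (∀ x, 0 ≤ M.prior x) ∧ (∑ x, M.prior x) = 1 ∧
  (∀ (k : Fin K) x, (∀ y, 0 ≤ M.obs0 k x y) ∧ (∑ y, M.obs0 k x y) = 1) ∧
  (∀ t x u, (∀ x', 0 ≤ M.trans t x u x') ∧ (∑ x', M.trans t x u x') = 1) ∧
  (∀ t (k : Fin K) x u, (∀ y, 0 ≤ M.obs t k x u y) ∧ (∑ y, M.obs t k x u y) = 1)

/-- The probability of a trajectory under the strategy profile `γ`: the product of the
Markovian kernels along the path, the actions being generated by `γ`. -/
noncomputable def prob (n : ℕ) (M : Kernels X Y U) (γ : Strat Y U) (ω : Traj n X Y) : ℝ :=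
  M.prior (stateAt ω 0) * (∏ k, M.obs0 k (stateAt ω 0) (obsAt ω 0 k)) *
    ∏ t ∈ Finset.range n,
      (M.trans t (stateAt ω t) (actAt γ ω t) (stateAt ω (t + 1)) *
        ∏ k, M.obs t k (stateAt ω (t + 1)) (actAt γ ω t) (obsAt ω (t + 1) k))

/-- `ℙ^γ(A)` on the canonical finite path space. -/
noncomputable def Pr (n : ℕ) (M : Kernels X Y U) (γ : Strat Y U) (A : Traj n X Y → Prop) : ℝ :=
  ∑ ω : Traj n X Y, if A ω then prob n M γ ω else 0

/-- Conditional probability `ℙ^γ(A | B)`. -/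
noncomputable def condPr (n : ℕ) (M : Kernels X Y U) (γ : Strat Y U)
    (A B : Traj n X Y → Prop) : ℝ :=
  Pr n M γ (fun ω => A ω ∧ B ω) / Pr n M γ B

/-- The expected total cost `J_n(γ) = 𝔼^γ [Σ_t ℓ(t, X_t, U_t^{(K)})]`. -/
noncomputable def J (n : ℕ) (M : Kernels X Y U) (γ : Strat Y U) : ℝ :=
  ∑ ω : Traj n X Y, prob n M γ ω *
    ∑ t ∈ Finset.range (n + 1), M.cost t (stateAt ω t) (actAt γ ω t)

/-- The conditional cost-to-go from time `t` given the event `B`: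
`𝔼^γ [Σ_{τ=t}^n ℓ(τ, X_τ, U_τ^{(K)}) | B]`. -/
noncomputable def Jcond (n : ℕ) (M : Kernels X Y U) (γ : Strat Y U) (t : ℕ)
    (B : Traj n X Y → Prop) : ℝ :=
  (∑ ω : Traj n X Y,
      if B ω then prob n M γ ω * ∑ τ ∈ Finset.Icc t n, M.cost τ (stateAt ω τ) (actAt γ ω τ)
      else 0) / Pr n M γ B

/-- Person-by-person optimality of the profile `γo`. -/
noncomputable def PbPOptimal (n T : ℕ) (M : Kernels X Y U) (γo : Strat Y U) : Prop :=
  Admissible T γo ∧ ∀ (k : Fin K) (g : SStrat Y U k),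
    Admissible T (updStrat γo k g) → J n M γo ≤ J n M (updStrat γo k g)

/-- Person-by-person optimality of `γo` within the class `P` of strategy profiles. -/
noncomputable def PbPOptimalIn (n T : ℕ) (M : Kernels X Y U) (P : Strat Y U → Prop)
    (γo : Strat Y U) : Prop :=
  Admissible T γo ∧ P γo ∧ ∀ (k : Fin K) (g : SStrat Y U k),
    Admissible T (updStrat γo k g) → P (updStrat γo k g) →
      J n M γo ≤ J n M (updStrat γo k g)

/-! ### Information events: realizations of `I_t^k`, `Δ_t^{(K)}`, `Λ_t^k` -/

/-- The event `{I_t^k = i_t^k}`, where the realization `i_t^k = {δ_t^{(K)}, λ_t^k}` is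
recorded by total functions `iy, iu` (only the coordinates of the information pattern
matter). -/
def InfoEq {n : ℕ} (T : ℕ) (γ : Strat Y U) (k : Fin K) (t : ℕ)
    (iy : ℕ → ∀ j, Y j) (iu : ℕ → ∀ j, U j) (ω : Traj n X Y) : Prop :=
  (∀ s j, s + T ≤ t → obsAt ω s j = iy s j) ∧
  (∀ s j, s + T ≤ t → actAt γ ω s j = iu s j) ∧
  (∀ s, s ≤ t → obsAt ω s k = iy s k) ∧
  (∀ s, s < t → actAt γ ω s k = iu s k)

/-- The event `{Δ_t^{(K)} = δ_t^{(K)}}` (common/shared data). -/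
def CommonEq {n : ℕ} (T : ℕ) (γ : Strat Y U) (t : ℕ)
    (δy : ℕ → ∀ j, Y j) (δu : ℕ → ∀ j, U j) (ω : Traj n X Y) : Prop :=
  (∀ s j, s + T ≤ t → obsAt ω s j = δy s j) ∧
  (∀ s j, s + T ≤ t → actAt γ ω s j = δu s j)

/-- The event `{Λ_t^{-k} = λ_t^{-k}}` (private data of the other stations). -/
def PrivOthersEq {n : ℕ} (T : ℕ) (γ : Strat Y U) (k : Fin K) (t : ℕ)
    (ly : ℕ → ∀ j, Y j) (lu : ℕ → ∀ j, U j) (ω : Traj n X Y) : Prop :=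
  (∀ s j, j ≠ k → s ≤ t → t < s + T → obsAt ω s j = ly s j) ∧
  (∀ s j, j ≠ k → s < t → t < s + T → actAt γ ω s j = lu s j)

/-- The event `{Λ_t^{(K)} = λ_t^{(K)}}` (private data of all stations). -/
def PrivAllEq {n : ℕ} (T : ℕ) (γ : Strat Y U) (t : ℕ)
    (ly : ℕ → ∀ j, Y j) (lu : ℕ → ∀ j, U j) (ω : Traj n X Y) : Prop :=
  (∀ s j, s ≤ t → t < s + T → obsAt ω s j = ly s j) ∧
  (∀ s j, s < t → t < s + T → actAt γ ω s j = lu s j)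

/-- Agreement of two trajectories on the common data `Δ_t^{(K)}`. -/
def CommonAgree {n : ℕ} (T : ℕ) (γ : Strat Y U) (t : ℕ) (ω ω' : Traj n X Y) : Prop :=
  (∀ s (j : Fin K), s + T ≤ t → obsAt ω s j = obsAt ω' s j) ∧
  (∀ s (j : Fin K), s + T ≤ t → actAt γ ω s j = actAt γ ω' s j)

/-- Agreement of two trajectories on station `k`'s private data `Λ_t^k`. -/
def PrivAgree {n : ℕ} (T : ℕ) (γ : Strat Y U) (k : Fin K) (t : ℕ) (ω ω' : Traj n X Y) : Prop :=
  (∀ s, s ≤ t → t < s + T → obsAt ω s k = obsAt ω' s k) ∧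
  (∀ s, s < t → t < s + T → actAt γ ω s k = actAt γ ω' s k)

/-- Agreement of two trajectories on station `k`'s information `I_t^k`. -/
def InfoAgree {n : ℕ} (T : ℕ) (γ : Strat Y U) (k : Fin K) (t : ℕ) (ω ω' : Traj n X Y) : Prop :=
  CommonAgree T γ t ω ω' ∧
  (∀ s, s ≤ t → obsAt ω s k = obsAt ω' s k) ∧
  (∀ s, s < t → actAt γ ω s k = actAt γ ω' s k)

/-! ### Posteriors -/

/-- The private posterior `Ξ_t^k[i_t^k](x, λ_t^{-k})
 = ℙ^γ(X_t = x, Λ_t^{-k} = λ_t^{-k} | I_t^k = i_t^k)`. -/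
noncomputable def Xi (n T : ℕ) (M : Kernels X Y U) (γ : Strat Y U) (k : Fin K) (t : ℕ)
    (iy : ℕ → ∀ j, Y j) (iu : ℕ → ∀ j, U j) (x : X)
    (ly : ℕ → ∀ j, Y j) (lu : ℕ → ∀ j, U j) : ℝ :=
  condPr n M γ (fun ω => stateAt ω t = x ∧ PrivOthersEq T γ k t ly lu ω)
    (InfoEq T γ k t iy iu)

/-- The centralized posterior `Π_t^{(K)}[δ_t^{(K)}](x) = ℙ^γ(X_{t-T} = x | Δ_t^{(K)} = δ)`. -/
noncomputable def PiPost (n T : ℕ) (M : Kernels X Y U) (γ : Strat Y U) (t : ℕ)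
    (δy : ℕ → ∀ j, Y j) (δu : ℕ → ∀ j, U j) (x : X) : ℝ :=
  condPr n M γ (fun ω => stateAt ω (t - T) = x) (CommonEq T γ t δy δu)

/-- The centralized posterior
`Θ_t^{γ}[δ_t^{(K)}](x, λ_t^{(K)}) = ℙ^γ(X_t = x, Λ_t^{(K)} = λ | Δ_t^{(K)} = δ)`. -/
noncomputable def ThetaPost (n T : ℕ) (M : Kernels X Y U) (γ : Strat Y U) (t : ℕ)
    (δy : ℕ → ∀ j, Y j) (δu : ℕ → ∀ j, U j) (x : X)
    (ly : ℕ → ∀ j, Y j) (lu : ℕ → ∀ j, U j) : ℝ :=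
  condPr n M γ (fun ω => stateAt ω t = x ∧ PrivAllEq T γ t ly lu ω) (CommonEq T γ t δy δu)

/-- The realization `I_t^k = i_t^k` has positive probability under `γ`. -/
noncomputable def PosInfo (n T : ℕ) (M : Kernels X Y U) (γ : Strat Y U) (k : Fin K) (t : ℕ)
    (iy : ℕ → ∀ j, Y j) (iu : ℕ → ∀ j, U j) : Prop :=
  0 < Pr n M γ (InfoEq T γ k t iy iu)

/-- The random private posterior `Ξ_t^k[I_t^k]` evaluated along the trajectory `ω`. -/
noncomputable def XiAt (n T : ℕ) (M : Kernels X Y U) (γ : Strat Y U) (k : Fin K) (t : ℕ)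
    (ω : Traj n X Y) : X → (ℕ → ∀ j, Y j) → (ℕ → ∀ j, U j) → ℝ :=
  fun x ly lu => Xi n T M γ k t (fun s => ω.2 (idx n s)) (actAt γ ω) x ly lu

/-! ### Finite parametrization of private realizations -/

variable [∀ k, DecidableEq (Y k)] [∀ k, DecidableEq (U k)] [∀ k, Fintype (U k)]
variable [∀ k, Nonempty (Y k)]

/-- Canonical (finite) set of realizations of `Λ_t^{-k}`: pairs of functions supported on
the private windows of the stations `j ≠ k` (observations at times `s ≤ t` with
`t < s + T`; actions at times `s < t` with `t < s + T`) and equal to a fixed default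
outside. -/
noncomputable def privSet (n T : ℕ) (k : Fin K) (t : ℕ) :
    Finset ((Fin (n + 1) → ∀ j, Y j) × (Fin (n + 1) → ∀ j, U j)) :=
  Finset.univ.filter (fun p =>
    (∀ (s : Fin (n + 1)) (j : Fin K), ¬(j ≠ k ∧ s.1 ≤ t ∧ t < s.1 + T) →
        p.1 s j = Classical.arbitrary (Y j)) ∧
    (∀ (s : Fin (n + 1)) (j : Fin K), ¬(j ≠ k ∧ s.1 < t ∧ t < s.1 + T) →
        p.2 s j = Classical.arbitrary (U j)))

/-- Canonical (finite) set of realizations of `Λ_t^{(K)}` (all stations). -/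
noncomputable def privAllSet (n T t : ℕ) :
    Finset ((Fin (n + 1) → ∀ j, Y j) × (Fin (n + 1) → ∀ j, U j)) :=
  Finset.univ.filter (fun p =>
    (∀ (s : Fin (n + 1)) (j : Fin K), ¬(s.1 ≤ t ∧ t < s.1 + T) →
        p.1 s j = Classical.arbitrary (Y j)) ∧
    (∀ (s : Fin (n + 1)) (j : Fin K), ¬(s.1 < t ∧ t < s.1 + T) →
        p.2 s j = Classical.arbitrary (U j)))

/-- View the observation part of a private realization as a (ℕ-indexed) realization
function. -/
def pWinY {n : ℕ} (p : (Fin (n + 1) → ∀ j, Y j) × (Fin (n + 1) → ∀ j, U j)) :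
    ℕ → ∀ j, Y j := fun s => p.1 (idx n s)

/-- View the action part of a private realization as a realization function. -/
def pWinU {n : ℕ} (p : (Fin (n + 1) → ∀ j, Y j) × (Fin (n + 1) → ∀ j, U j)) :
    ℕ → ∀ j, U j := fun s => p.2 (idx n s)

/-- The observation history obtained by combining the realized information `iy` of
station `k` (own and common coordinates) with the private window `py` of the other
stations. -/
def mixObs {n : ℕ} (T t : ℕ) (k : Fin K) (iy : ℕ → ∀ j, Y j)
    (py : Fin (n + 1) → ∀ j, Y j) : ℕ → ∀ j, Y j :=
  fun s j => if j = k ∨ s + T ≤ t then iy s j else py (idx n s) j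

/-- The action history obtained by combining the realized information `iu` of station `k`
with the private window `pu` of the other stations. -/
def mixAct {n : ℕ} (T t : ℕ) (k : Fin K) (iu : ℕ → ∀ j, U j)
    (pu : Fin (n + 1) → ∀ j, U j) : ℕ → ∀ j, U j :=
  fun s j => if j = k ∨ s + T ≤ t then iu s j else pu (idx n s) j

/-- The action profile at time `t`: station `k` applies `u`, while each other station `j`
applies `γ_t^j(δ_t^{(K)}, λ_t^j)`, its strategy evaluated at the common data recorded in
`(iy, iu)` and its private data recorded in the window `p`. -/
noncomputable def prof {n : ℕ} (T t : ℕ) (γ : Strat Y U) (k : Fin K)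
    (iy : ℕ → ∀ j, Y j) (iu : ℕ → ∀ j, U j)
    (p : (Fin (n + 1) → ∀ j, Y j) × (Fin (n + 1) → ∀ j, U j)) (u : U k) : ∀ j, U j :=
  Function.update (fun j => γ j t (mixObs T t k iy p.1) (mixAct T t k iu p.2)) k u

/-- The observation history of all stations obtained from the common data `δy` and the
private windows `py` of all stations. -/
def mixObsAll {n : ℕ} (T t : ℕ) (δy : ℕ → ∀ j, Y j)
    (py : Fin (n + 1) → ∀ j, Y j) : ℕ → ∀ j, Y j :=
  fun s j => if s + T ≤ t then δy s j else py (idx n s) j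

/-- The action history of all stations obtained from the common data `δu` and the private
windows `pu` of all stations. -/
def mixActAll {n : ℕ} (T t : ℕ) (δu : ℕ → ∀ j, U j)
    (pu : Fin (n + 1) → ∀ j, U j) : ℕ → ∀ j, U j :=
  fun s j => if s + T ≤ t then δu s j else pu (idx n s) j

/-- The action profile `u_t^{(K)} = {γ_t^j(δ_t^{(K)}, λ_t^j)}_{j=1}^K`. -/
noncomputable def profAll {n : ℕ} (T t : ℕ) (γ : Strat Y U)
    (δy : ℕ → ∀ j, Y j) (δu : ℕ → ∀ j, U j)
    (p : (Fin (n + 1) → ∀ j, Y j) × (Fin (n + 1) → ∀ j, U j)) : ∀ j, U j :=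
  fun j => γ j t (mixObsAll T t δy p.1) (mixActAll T t δu p.2)

/-- The realization of `I_{t+1}^k` obtained from `i_t^k = (iy, iu)`, the new own
observation `y'` at time `t+1` and the private window `p` of the other stations. -/
noncomputable def newObs {n : ℕ} (T t : ℕ) (k : Fin K) (iy : ℕ → ∀ j, Y j)
    (p : (Fin (n + 1) → ∀ j, Y j) × (Fin (n + 1) → ∀ j, U j)) (y' : Y k) : ℕ → ∀ j, Y j :=
  fun s => if s = t + 1 then Function.update (fun j => iy s j) k y' else mixObs T t k iy p.1 s

/-- The action part of the realization of `I_{t+1}^k`: at time `t` station `k` applies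
`u` and the others apply their strategies. -/
noncomputable def newAct {n : ℕ} (T t : ℕ) (γ : Strat Y U) (k : Fin K)
    (iy : ℕ → ∀ j, Y j) (iu : ℕ → ∀ j, U j)
    (p : (Fin (n + 1) → ∀ j, Y j) × (Fin (n + 1) → ∀ j, U j)) (u : U k) : ℕ → ∀ j, U j :=
  fun s => if s = t then prof T t γ k iy iu p u else mixAct T t k iu p.2 s

/-! ### Dynamic programming equations (Theorem 3 (1.1)) -/

/-- The expected stage cost at time `t` under the private posterior `Ξ_t^k[i_t^k]` when
station `k` applies `u` and the other stations apply their strategies: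
`Σ_{x_t, λ_t^{-k}} ℓ(t, x_t, u_t^k, γ_t^{-k}(δ_t^{(K)}, λ_t^{-k})) Ξ_t^k[i_t^k](x_t, λ_t^{-k})`. -/
noncomputable def dpStage (n T : ℕ) (M : Kernels X Y U) (γ : Strat Y U) (k : Fin K)
    (t : ℕ) (iy : ℕ → ∀ j, Y j) (iu : ℕ → ∀ j, U j) (u : U k) : ℝ :=
  ∑ x : X, ∑ p ∈ privSet n T k t,
    M.cost t x (prof T t γ k iy iu p u) * Xi n T M γ k t iy iu x (pWinY p) (pWinU p)

/-- The expected continuation value: the function `V` at time `t+1`, evaluated at the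
updated realization `(i_t^k, y_{t+1}^k, u_t^k, y_{t-T+1}^{-k}, u_{t-T+1}^{-k})`, averaged
with the kernel
`q_{t+1}^k(dy_{t+1}^k | x_{t+1}, u) s_{t+1}(dx_{t+1} | x_t, u) Ξ_t^k[i_t^k](dx_t, dλ_t^{-k})`. -/
noncomputable def dpCont (n T : ℕ) (M : Kernels X Y U) (γ : Strat Y U) (k : Fin K)
    (t : ℕ) (iy : ℕ → ∀ j, Y j) (iu : ℕ → ∀ j, U j)
    (V : ℕ → (ℕ → ∀ j, Y j) → (ℕ → ∀ j, U j) → ℝ) (u : U k) : ℝ :=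
  ∑ y' : Y k, ∑ x : X, ∑ x' : X, ∑ p ∈ privSet n T k t,
    V (t + 1) (newObs T t k iy p y') (newAct T t γ k iy iu p u) *
      M.obs t k x' (prof T t γ k iy iu p u) y' *
      M.trans t x (prof T t γ k iy iu p u) x' *
      Xi n T M γ k t iy iu x (pWinY p) (pWinU p)

/-- `V` satisfies the dynamic programming equations of Theorem 3 (1.1) for station `k`
(with the other stations' strategies fixed to those of `γ`): at the terminal time the
minimum over the action space of the expected stage cost, and before that the minimum
over the action space of expected stage cost plus expected continuation value, on every
realization of `I_t^k` of positive probability. -/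
noncomputable def SatisfiesDP (n T : ℕ) (M : Kernels X Y U) (γ : Strat Y U) (k : Fin K)
    (V : ℕ → (ℕ → ∀ j, Y j) → (ℕ → ∀ j, U j) → ℝ) : Prop :=
  (∀ iy iu, PosInfo n T M γ k n iy iu →
      V n iy iu = ⨅ u : U k, dpStage n T M γ k n iy iu u) ∧
  (∀ t iy iu, t < n → PosInfo n T M γ k t iy iu →
      V t iy iu = ⨅ u : U k, (dpStage n T M γ k t iy iu u + dpCont n T M γ k t iy iu V u))

/-- Station `k`'s strategy in `γ` attains, at every realization of positive probability,
the minimum in the dynamic programming equations with value function `V`. -/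
noncomputable def AttainsDP (n T : ℕ) (M : Kernels X Y U) (γ : Strat Y U) (k : Fin K)
    (V : ℕ → (ℕ → ∀ j, Y j) → (ℕ → ∀ j, U j) → ℝ) : Prop :=
  (∀ iy iu, PosInfo n T M γ k n iy iu →
      V n iy iu = dpStage n T M γ k n iy iu (γ k n iy iu)) ∧
  (∀ t iy iu, t < n → PosInfo n T M γ k t iy iu →
      V t iy iu = dpStage n T M γ k t iy iu (γ k t iy iu) +
        dpCont n T M γ k t iy iu V (γ k t iy iu))

/-- The value process `𝒱_t^{γ^{k,o}, γ^{-k,o}}(i_t^k)`: the infimum, over admissible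
strategies of station `k` used from time `t` on (station `k` using `γo`'s strategy before
`t` and the other stations using `γo` throughout), of the conditional cost-to-go given
`I_t^k = i_t^k`. -/
noncomputable def Vval (n T : ℕ) (M : Kernels X Y U) (γo : Strat Y U) (k : Fin K) (t : ℕ)
    (iy : ℕ → ∀ j, Y j) (iu : ℕ → ∀ j, U j) : ℝ :=
  sInf { r : ℝ | ∃ g : SStrat Y U k,
    Admissible T (updStrat γo k (splice (γo k) g t)) ∧
    r = Jcond n M (updStrat γo k (splice (γo k) g t)) t
          (InfoEq T (updStrat γo k (splice (γo k) g t)) k t iy iu) }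

/-! ### Structured strategy classes -/

/-- Semi-separated strategies: for every station `k` and time `t`, the action depends on
the information `i_t^k` only through `(Ξ_t^k[i_t^k], δ_t^{(K)}, λ_t^k)`. -/
noncomputable def SemiSeparated (n T : ℕ) (M : Kernels X Y U) (γ : Strat Y U) : Prop :=
  ∀ (k : Fin K) (t : ℕ) (y y' : ℕ → ∀ j, Y j) (u u' : ℕ → ∀ j, U j),
    (∀ x ly lu, Xi n T M γ k t y u x ly lu = Xi n T M γ k t y' u' x ly lu) →
    (∀ s j, s + T ≤ t → y s j = y' s j) →
    (∀ s j, s + T ≤ t → u s j = u' s j) →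
    (∀ s, s ≤ t → t < s + T → y s k = y' s k) →
    (∀ s, s < t → t < s + T → u s k = u' s k) →
    γ k t y u = γ k t y' u'

/-- Separated strategies (with the centralized posterior `Π`): the action depends on
`i_t^k` only through `(Ξ_t^k[i_t^k], Π_t^{(K)}[δ_t^{(K)}], λ_t^k)`. -/
noncomputable def SeparatedPi (n T : ℕ) (M : Kernels X Y U) (γ : Strat Y U) : Prop :=
  ∀ (k : Fin K) (t : ℕ) (y y' : ℕ → ∀ j, Y j) (u u' : ℕ → ∀ j, U j),
    (∀ x ly lu, Xi n T M γ k t y u x ly lu = Xi n T M γ k t y' u' x ly lu) →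
    (∀ x, PiPost n T M γ t y u x = PiPost n T M γ t y' u' x) →
    (∀ s, s ≤ t → t < s + T → y s k = y' s k) →
    (∀ s, s < t → t < s + T → u s k = u' s k) →
    γ k t y u = γ k t y' u'

/-- Separated strategies (with the centralized posterior `Θ`): the action depends on
`i_t^k` only through `(Ξ_t^k[i_t^k], Θ_t^{γ}[δ_t^{(K)}], λ_t^k)`. -/
noncomputable def SeparatedTheta (n T : ℕ) (M : Kernels X Y U) (γ : Strat Y U) : Prop :=
  ∀ (k : Fin K) (t : ℕ) (y y' : ℕ → ∀ j, Y j) (u u' : ℕ → ∀ j, U j),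
    (∀ x ly lu, Xi n T M γ k t y u x ly lu = Xi n T M γ k t y' u' x ly lu) →
    (∀ x ly lu, ThetaPost n T M γ t y u x ly lu = ThetaPost n T M γ t y' u' x ly lu) →
    (∀ s, s ≤ t → t < s + T → y s k = y' s k) →
    (∀ s, s < t → t < s + T → u s k = u' s k) →
    γ k t y u = γ k t y' u'

/-- Information-state strategies: the action depends on `i_t^k` only through the pair
`(Ξ_t^k[i_t^k], Θ_t^{γ}[δ_t^{(K)}])`. -/
noncomputable def InfoStateTheta (n T : ℕ) (M : Kernels X Y U) (γ : Strat Y U) : Prop :=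
  ∀ (k : Fin K) (t : ℕ) (y y' : ℕ → ∀ j, Y j) (u u' : ℕ → ∀ j, U j),
    (∀ x ly lu, Xi n T M γ k t y u x ly lu = Xi n T M γ k t y' u' x ly lu) →
    (∀ x ly lu, ThetaPost n T M γ t y u x ly lu = ThetaPost n T M γ t y' u' x ly lu) →
    γ k t y u = γ k t y' u'


/-! The weight of a trajectory up to time `t` involves the strategies only through the actions
generated before `t`.  On `{I_t^k = i_t^k}` station `k`'s actions are those recorded in `i_t^k`,
so two strategies of station `k` that can produce `i_t^k` generate the same actions of all stations
there; the kernels after time `t` sum to one whatever the actions are.  Hence numerator and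
denominator of the private posterior are the same under both strategies. -/

section Actions

variable {K : ℕ} {Y U : Fin K → Type}

/-- Nonanticipative profiles: actions depend on no observation made after the time of acting.
Nothing is asked about the action history, because `actUpto` only feeds past actions to `γ`. -/
def Causal (γ : Strat Y U) : Prop :=
  ∀ (j : Fin K) (t : ℕ) (y y' : ℕ → ∀ j, Y j) (u : ℕ → ∀ j, U j),
    (∀ s ≤ t, y s = y' s) → γ j t y u = γ j t y' u

lemma Admissible.causal {T : ℕ} {γ : Strat Y U} (hγ : Admissible T γ) : Causal γ :=
  fun j t y y' u hy => hγ j t y y' u u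
    (fun s i hs => congrFun (hy s (by omega)) i) (fun _ _ _ => rfl)
    (fun s hs => congrFun (hy s hs) j) (fun _ _ => rfl)

lemma Admissible.sAdmissible {T : ℕ} {γ : Strat Y U} (hγ : Admissible T γ) (k : Fin K) :
    SAdmissible T k (γ k) :=
  hγ k

variable [∀ k, Nonempty (U k)]

lemma actUpto_apply (γ : Strat Y U) (y : ℕ → ∀ j, Y j) (t s : ℕ) :
    actUpto γ y t s = if s < t then act γ y s else fun j => Classical.arbitrary (U j) := by
  induction t with
  | zero => rfl
  | succ t ih =>
    rcases lt_trichotomy s t with h | rfl | h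
    · simp only [actUpto, if_neg h.ne, ih, if_pos h, if_pos (Nat.lt_succ_of_lt h)]
    · simp only [actUpto, if_pos (Nat.lt_succ_self s)]
      rfl
    · simp only [actUpto, if_neg h.ne', ih, if_neg h.not_gt, if_neg (show ¬s < t + 1 by omega)]

lemma actUpto_of_lt (γ : Strat Y U) (y : ℕ → ∀ j, Y j) {t s : ℕ} (h : s < t) :
    actUpto γ y t s = act γ y s := by
  rw [actUpto_apply, if_pos h]

lemma actUpto_congr {γ γ' : Strat Y U} {y y' : ℕ → ∀ j, Y j} {t : ℕ}
    (h : ∀ s < t, act γ y s = act γ' y' s) : actUpto γ y t = actUpto γ' y' t := by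
  funext s
  simp only [actUpto_apply]
  split_ifs with hs
  exacts [h s hs, rfl]

lemma Causal.act_eq {γ : Strat Y U} (hγ : Causal γ) {y y' : ℕ → ∀ j, Y j} {t : ℕ}
    (hy : ∀ s ≤ t, y s = y' s) : act γ y t = act γ y' t := by
  induction t using Nat.strong_induction_on with
  | _ t ih =>
    have past : actUpto γ y t = actUpto γ y' t :=
      actUpto_congr fun s hs => ih s hs fun r hr => hy r (hr.trans hs.le)
    funext j
    simp only [act, past]
    exact hγ j t y y' _ hy

end Actions

section Information

variable {X : Type} {K : ℕ} {Y U : Fin K → Type} [∀ k, Nonempty (U k)] {n T t : ℕ}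
  {γ γ' : Strat Y U} {k : Fin K} {iy : ℕ → ∀ j, Y j} {iu : ℕ → ∀ j, U j} {ω ω' : Traj n X Y}

lemma actAt_apply (γ : Strat Y U) (ω : Traj n X Y) (s : ℕ) (j : Fin K) :
    actAt γ ω s j = γ j s (obsAt ω) (actUpto γ (obsAt ω) s) :=
  rfl

lemma infoEq_congr (hT : 1 ≤ T) (hobs : ∀ s ≤ t, obsAt ω s = obsAt ω' s)
    (hact : ∀ s < t, actAt γ ω s = actAt γ' ω' s) :
    InfoEq T γ k t iy iu ω ↔ InfoEq T γ' k t iy iu ω' := by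
  refine and_congr ?_ (and_congr ?_ (and_congr ?_ ?_))
  · exact forall₃_congr fun s _ hs => by rw [hobs s (by omega)]
  · exact forall₃_congr fun s _ hs => by rw [hact s (by omega)]
  · exact forall₂_congr fun s hs => by rw [hobs s hs]
  · exact forall₂_congr fun s hs => by rw [hact s hs]

lemma privOthersEq_congr {ly : ℕ → ∀ j, Y j} {lu : ℕ → ∀ j, U j}
    (hobs : ∀ s ≤ t, obsAt ω s = obsAt ω' s) (hact : ∀ s < t, actAt γ ω s = actAt γ' ω' s) :
    PrivOthersEq T γ k t ly lu ω ↔ PrivOthersEq T γ' k t ly lu ω' := by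
  refine and_congr ?_ ?_
  · exact forall₄_congr fun s _ _ hs => by rw [hobs s hs]
  · exact forall₄_congr fun s _ _ hs => by rw [hact s hs]

lemma SAdmissible.apply_eq_of_infoEq {g : SStrat Y U k} (hg : SAdmissible T k g) (hT : 1 ≤ T)
    (h : InfoEq T γ k t iy iu ω) {s : ℕ} (hs : s ≤ t) :
    g s (obsAt ω) (actUpto γ (obsAt ω) s) = g s iy iu := by
  obtain ⟨commonObs, commonAct, ownObs, ownAct⟩ := h
  refine hg s _ _ _ _ (fun r j hr => commonObs r j (by omega)) (fun r j hr => ?_)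
    (fun r hr => ownObs r (by omega)) (fun r hr => ?_)
  · rw [actUpto_of_lt _ _ (by omega)]
    exact commonAct r j (by omega)
  · rw [actUpto_of_lt _ _ hr]
    exact ownAct r (by omega)

lemma InfoEq.apply_eq_action (h : InfoEq T γ k t iy iu ω) (hk : SAdmissible T k (γ k))
    (hT : 1 ≤ T) {s : ℕ} (hs : s < t) : γ k s iy iu = iu s k :=
  (hk.apply_eq_of_infoEq hT h hs.le).symm.trans (h.2.2.2 s hs)

lemma InfoEq.actAt_eq (h : InfoEq T γ k t iy iu ω) (hk' : SAdmissible T k (γ' k)) (hT : 1 ≤ T)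
    (hoff : ∀ j ≠ k, γ j = γ' j) (hrec : ∀ s < t, γ' k s iy iu = iu s k) {s : ℕ} (hs : s < t) :
    actAt γ ω s = actAt γ' ω s := by
  induction s using Nat.strong_induction_on with
  | _ s ih =>
    have past : actUpto γ (obsAt ω) s = actUpto γ' (obsAt ω) s :=
      actUpto_congr fun r hr => ih r hr (hr.trans hs)
    funext j
    by_cases hj : j = k
    · subst hj
      calc actAt γ ω s j
        _ = iu s j := h.2.2.2 s hs
        _ = γ' j s iy iu := (hrec s hs).symm
        _ = γ' j s (obsAt ω) (actUpto γ (obsAt ω) s) := (hk'.apply_eq_of_infoEq hT h hs.le).symm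
        _ = actAt γ' ω s j := by rw [past, actAt_apply]
    · rw [actAt_apply, actAt_apply, hoff j hj, past]

lemma infoEq_iff_of_off_eq (hk : SAdmissible T k (γ k)) (hk' : SAdmissible T k (γ' k))
    (hT : 1 ≤ T) (hoff : ∀ j ≠ k, γ j = γ' j) (hrec : ∀ s < t, γ k s iy iu = iu s k)
    (hrec' : ∀ s < t, γ' k s iy iu = iu s k) :
    InfoEq T γ k t iy iu ω ↔ InfoEq T γ' k t iy iu ω :=
  ⟨fun h => (infoEq_congr hT (fun _ _ => rfl) fun _ => h.actAt_eq hk' hT hoff hrec').1 h,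
    fun h => (infoEq_congr hT (fun _ _ => rfl) fun _ =>
      h.actAt_eq hk hT (fun j hj => (hoff j hj).symm) hrec).1 h⟩

end Information

section Determined

variable {X : Type} {K : ℕ} {Y U : Fin K → Type} {n t : ℕ} {β : Type*}

/-- Equality of the initial segments of two trajectories on `{0,…,t}`. -/
def AgreeUpTo (t : ℕ) (ω ω' : Traj n X Y) : Prop :=
  ∀ s ≤ t, stateAt ω s = stateAt ω' s ∧ obsAt ω s = obsAt ω' s

/-- Functions of the initial segment of the trajectory on `{0,…,t}`: the finite counterpart of
measurability with respect to the `σ`-algebra at time `t`. Events are the case `β = Prop`. -/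
def IsDeterminedUpTo (t : ℕ) (f : Traj n X Y → β) : Prop :=
  ∀ ⦃ω ω'⦄, AgreeUpTo t ω ω' → f ω = f ω'

lemma IsDeterminedUpTo.mono {f : Traj n X Y → β} {t' : ℕ} (hf : IsDeterminedUpTo t f)
    (htt' : t ≤ t') : IsDeterminedUpTo t' f :=
  fun _ _ h => hf fun s hs => h s (hs.trans htt')

lemma IsDeterminedUpTo.and {A B : Traj n X Y → Prop} (hA : IsDeterminedUpTo t A)
    (hB : IsDeterminedUpTo t B) : IsDeterminedUpTo t fun ω => A ω ∧ B ω :=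
  fun _ _ h => congrArg₂ And (hA h) (hB h)

lemma isDeterminedUpTo_stateAt_eq (t : ℕ) (x : X) :
    IsDeterminedUpTo t fun ω : Traj n X Y => stateAt ω t = x :=
  fun _ _ h => congrArg (· = x) (h t le_rfl).1

/-- The trajectory `ω` with its state and observations at time index `i` replaced by `v`. -/
def resample (i : Fin (n + 1)) (ω : Traj n X Y) (v : X × ∀ k, Y k) : Traj n X Y :=
  (Function.update ω.1 i v.1, Function.update ω.2 i v.2)

lemma stateAt_resample_self (ω : Traj n X Y) (v : X × ∀ k, Y k) (s : ℕ) :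
    stateAt (resample (idx n s) ω v) s = v.1 := by
  simp only [stateAt, resample, Function.update_self]

lemma obsAt_resample_self (ω : Traj n X Y) (v : X × ∀ k, Y k) (s : ℕ) (k : Fin K) :
    obsAt (resample (idx n s) ω v) s k = v.2 k := by
  simp only [obsAt, resample, Function.update_self]

lemma agreeUpTo_resample_succ {m : ℕ} (hm : m < n) (ω : Traj n X Y) (v : X × ∀ k, Y k) :
    AgreeUpTo m (resample (idx n (m + 1)) ω v) ω := by
  intro s hs
  have hne : idx n s ≠ idx n (m + 1) := by
    simp only [idx, ne_eq, Fin.mk.injEq]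
    omega
  refine ⟨?_, funext fun k => ?_⟩
  · simp only [stateAt, resample, Function.update_of_ne hne]
  · simp only [obsAt, resample, Function.update_of_ne hne]

lemma sum_sum_resample [Fintype X] [∀ k, Fintype (Y k)] {R : Type*} [AddCommMonoid R]
    (i : Fin (n + 1)) (f : Traj n X Y → R) :
    ∑ ω, ∑ v, f (resample i ω v) = Fintype.card (X × ∀ k, Y k) • ∑ ω, f ω := by
  -- Exchanging the new and the old coordinate is an involution of the pairs `(ω, v)`.
  have swap_involutive : Function.Involutive fun p : Traj n X Y × (X × ∀ k, Y k) =>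
      (resample i p.1 p.2, (p.1.1 i, p.1.2 i)) := by
    rintro ⟨⟨a, b⟩, c, d⟩
    simp [resample]
  calc ∑ ω, ∑ v, f (resample i ω v)
    _ = ∑ p : Traj n X Y × (X × ∀ k, Y k), f (resample i p.1 p.2) :=
        (Fintype.sum_prod_type' fun ω v => f (resample i ω v)).symm
    _ = ∑ p : Traj n X Y × (X × ∀ k, Y k), f p.1 :=
        Fintype.sum_equiv swap_involutive.toPerm _ _ fun _ => rfl
    _ = Fintype.card (X × ∀ k, Y k) • ∑ ω, f ω := by
        rw [Fintype.sum_prod_type_right]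
        simp only [sum_const, card_univ]

variable [∀ k, Nonempty (U k)] {T : ℕ} {γ : Strat Y U} {k : Fin K}

lemma Causal.isDeterminedUpTo_actAt (hγ : Causal γ) (t : ℕ) :
    IsDeterminedUpTo t fun ω : Traj n X Y => actAt γ ω t :=
  fun _ _ h => hγ.act_eq fun s hs => (h s hs).2

lemma Causal.isDeterminedUpTo_infoEq (hγ : Causal γ) (hT : 1 ≤ T) (iy : ℕ → ∀ j, Y j)
    (iu : ℕ → ∀ j, U j) :
    IsDeterminedUpTo t (InfoEq T γ k t iy iu : Traj n X Y → Prop) :=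
  fun _ _ h => propext <| infoEq_congr hT (fun s hs => (h s hs).2)
    fun s hs => (hγ.isDeterminedUpTo_actAt s).mono hs.le h

lemma Causal.isDeterminedUpTo_privOthersEq (hγ : Causal γ) (ly : ℕ → ∀ j, Y j)
    (lu : ℕ → ∀ j, U j) :
    IsDeterminedUpTo t (PrivOthersEq T γ k t ly lu : Traj n X Y → Prop) :=
  fun _ _ h => propext <| privOthersEq_congr (fun s hs => (h s hs).2)
    fun s hs => (hγ.isDeterminedUpTo_actAt s).mono hs.le h

end Determined

section Kernels

variable {X : Type} {K : ℕ} {Y U : Fin K → Type} [Fintype X] [∀ k, Fintype (Y k)]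
  {M : Kernels X Y U}

lemma Kernels.IsPMF.sum_trans (hM : M.IsPMF) (t : ℕ) (x : X) (u : ∀ j, U j) :
    ∑ x', M.trans t x u x' = 1 :=
  (hM.2.2.2.1 t x u).2

lemma Kernels.IsPMF.sum_prod_obs (hM : M.IsPMF) (t : ℕ) (x : X) (u : ∀ j, U j) :
    ∑ y : ∀ k, Y k, ∏ k, M.obs t k x u (y k) = 1 := by
  rw [← Fintype.prod_sum]
  exact prod_eq_one fun k _ => (hM.2.2.2.2 t k x u).2

end Kernels

section PrefixProbability

variable {X : Type} {K : ℕ} {Y U : Fin K → Type} [∀ k, Nonempty (U k)] {n t : ℕ}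
  {M : Kernels X Y U} {γ γ' : Strat Y U}

/-- The factor of `prob` for the step from time `t` to `t + 1`: the conditional probability of the
state and the observations at `t + 1` given the trajectory up to `t`. -/
noncomputable def stepProb (M : Kernels X Y U) (γ : Strat Y U) (t : ℕ) (ω : Traj n X Y) : ℝ :=
  M.trans t (stateAt ω t) (actAt γ ω t) (stateAt ω (t + 1)) *
    ∏ k, M.obs t k (stateAt ω (t + 1)) (actAt γ ω t) (obsAt ω (t + 1) k)

/-- The probability of the initial segment of `ω` on `{0,…,m}`, obtained by stopping the product
in `prob` at time `m`. -/
noncomputable def prefixProb (M : Kernels X Y U) (γ : Strat Y U) (m : ℕ) (ω : Traj n X Y) : ℝ :=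
  M.prior (stateAt ω 0) * (∏ k, M.obs0 k (stateAt ω 0) (obsAt ω 0 k)) *
    ∏ s ∈ range m, stepProb M γ s ω

lemma prefixProb_succ (m : ℕ) (ω : Traj n X Y) :
    prefixProb M γ (m + 1) ω = prefixProb M γ m ω * stepProb M γ m ω := by
  simp only [prefixProb, prod_range_succ, mul_assoc]

lemma prefixProb_congr_of_actAt_eq {ω : Traj n X Y}
    (hact : ∀ s < t, actAt γ ω s = actAt γ' ω s) :
    prefixProb M γ t ω = prefixProb M γ' t ω := by
  unfold prefixProb stepProb
  congr 1
  exact prod_congr rfl fun s hs => by rw [hact s (mem_range.1 hs)]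

lemma Causal.isDeterminedUpTo_stepProb (hγ : Causal γ) (t : ℕ) :
    IsDeterminedUpTo (t + 1) (stepProb M γ t : Traj n X Y → ℝ) := by
  intro ω ω' h
  have hact : actAt γ ω t = actAt γ ω' t := (hγ.isDeterminedUpTo_actAt t).mono t.le_succ h
  simp only [stepProb, hact, (h t t.le_succ).1, (h (t + 1) le_rfl).1, (h (t + 1) le_rfl).2]

lemma Causal.isDeterminedUpTo_prefixProb (hγ : Causal γ) (m : ℕ) :
    IsDeterminedUpTo m (prefixProb M γ m : Traj n X Y → ℝ) := by
  intro ω ω' h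
  have hstep : ∀ s ∈ range m, stepProb M γ s ω = stepProb M γ s ω' := fun s hs =>
    (hγ.isDeterminedUpTo_stepProb s).mono (mem_range.1 hs) h
  simp only [prefixProb, prod_congr rfl hstep, (h 0 m.zero_le).1, (h 0 m.zero_le).2]

variable [Fintype X] [∀ k, Fintype (Y k)]

lemma Kernels.IsPMF.sum_stepProb_resample (hM : M.IsPMF) (hγ : Causal γ) {m : ℕ} (hm : m < n)
    (ω : Traj n X Y) : ∑ v, stepProb M γ m (resample (idx n (m + 1)) ω v) = 1 := by
  have hstep : ∀ v : X × ∀ k, Y k, stepProb M γ m (resample (idx n (m + 1)) ω v) =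
      M.trans m (stateAt ω m) (actAt γ ω m) v.1 * ∏ k, M.obs m k v.1 (actAt γ ω m) (v.2 k) := by
    intro v
    have hagree := agreeUpTo_resample_succ hm ω v
    have hact : actAt γ (resample (idx n (m + 1)) ω v) m = actAt γ ω m :=
      hγ.isDeterminedUpTo_actAt m hagree
    simp only [stepProb, hact, (hagree m le_rfl).1, stateAt_resample_self, obsAt_resample_self]
  simp only [hstep, Fintype.sum_prod_type, ← mul_sum, hM.sum_prod_obs, mul_one, hM.sum_trans]

-- The cardinality accounts for the coordinate at time `m + 1`, which is free in the right-hand sum.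
lemma Kernels.IsPMF.card_mul_sum_mul_stepProb (hM : M.IsPMF) (hγ : Causal γ) {m : ℕ} (hm : m < n)
    {f : Traj n X Y → ℝ} (hf : IsDeterminedUpTo m f) :
    (Fintype.card (X × ∀ k, Y k) : ℝ) * ∑ ω, f ω * stepProb M γ m ω = ∑ ω, f ω := by
  rw [← nsmul_eq_mul, ← sum_sum_resample (idx n (m + 1))]
  refine sum_congr rfl fun ω _ => ?_
  simp only [hf (agreeUpTo_resample_succ hm ω _), ← mul_sum, hM.sum_stepProb_resample hγ hm,
    mul_one]

lemma Kernels.IsPMF.card_pow_mul_sum_mul_prefixProb (hM : M.IsPMF) (hγ : Causal γ)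
    {f : Traj n X Y → ℝ} (hf : IsDeterminedUpTo t f) (d : ℕ) (hd : t + d ≤ n) :
    (Fintype.card (X × ∀ k, Y k) : ℝ) ^ d * ∑ ω, f ω * prefixProb M γ (t + d) ω =
      ∑ ω, f ω * prefixProb M γ t ω := by
  induction d with
  | zero => rw [pow_zero, one_mul, add_zero]
  | succ d ih =>
    have hweight : IsDeterminedUpTo (t + d) fun ω => f ω * prefixProb M γ (t + d) ω :=
      fun ω ω' h => congrArg₂ (· * ·) (hf.mono (t.le_add_right d) h)
        (hγ.isDeterminedUpTo_prefixProb (t + d) h)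
    rw [← ih (by omega), pow_succ, mul_assoc, ← hM.card_mul_sum_mul_stepProb hγ (by omega) hweight]
    simp only [← add_assoc, prefixProb_succ, mul_assoc]

lemma Pr_eq_sum_indicator_mul_prefixProb (A : Traj n X Y → Prop) :
    Pr n M γ A = ∑ ω, (if A ω then 1 else 0) * prefixProb M γ n ω := by
  simp only [ite_mul, one_mul, zero_mul]
  rfl

lemma Kernels.IsPMF.Pr_congr_of_actAt_eq (hM : M.IsPMF) (hγ : Causal γ) (hγ' : Causal γ')
    (ht : t ≤ n) {A : Traj n X Y → Prop} (hA : IsDeterminedUpTo t A)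
    (hact : ∀ ω, A ω → ∀ s < t, actAt γ ω s = actAt γ' ω s) : Pr n M γ A = Pr n M γ' A := by
  obtain ⟨d, rfl⟩ := Nat.exists_eq_add_of_le ht
  have hind : IsDeterminedUpTo t fun ω => (if A ω then 1 else 0 : ℝ) :=
    fun ω ω' h => by simp only [hA h]
  simp only [Pr_eq_sum_indicator_mul_prefixProb]
  rcases isEmpty_or_nonempty (Traj (t + d) X Y) with hempty | ⟨⟨ω₀⟩⟩
  · simp only [univ_eq_empty, sum_empty]
  have hcard : (Fintype.card (X × ∀ k, Y k) : ℝ) ^ d ≠ 0 :=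
    pow_ne_zero d <| Nat.cast_ne_zero.2 <|
      @Fintype.card_ne_zero _ _ ⟨(stateAt ω₀ 0, obsAt ω₀ 0)⟩
  apply mul_left_cancel₀ hcard
  rw [hM.card_pow_mul_sum_mul_prefixProb hγ hind d le_rfl,
    hM.card_pow_mul_sum_mul_prefixProb hγ' hind d le_rfl]
  refine sum_congr rfl fun ω _ => ?_
  split_ifs with h
  · rw [prefixProb_congr_of_actAt_eq (hact ω h)]
  · simp only [zero_mul]

lemma Kernels.IsPMF.condPr_congr_of_actAt_eq (hM : M.IsPMF) (hγ : Causal γ) (hγ' : Causal γ')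
    (ht : t ≤ n) {A A' B B' : Traj n X Y → Prop} (hA : IsDeterminedUpTo t A)
    (hB : IsDeterminedUpTo t B) (hBB' : ∀ ω, B ω ↔ B' ω) (hAA' : ∀ ω, B ω → (A ω ↔ A' ω))
    (hact : ∀ ω, B ω → ∀ s < t, actAt γ ω s = actAt γ' ω s) :
    condPr n M γ A B = condPr n M γ' A' B' := by
  obtain rfl : B = B' := funext fun ω => propext (hBB' ω)
  have hjoint : (fun ω => A' ω ∧ B ω) = fun ω => A ω ∧ B ω :=
    funext fun ω => propext <| and_congr_left fun h => (hAA' ω h).symm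
  rw [condPr, condPr, hjoint, hM.Pr_congr_of_actAt_eq hγ hγ' ht (hA.and hB) fun ω h => hact ω h.2,
    hM.Pr_congr_of_actAt_eq hγ hγ' ht hB hact]

lemma exists_of_Pr_pos {A : Traj n X Y → Prop} (h : 0 < Pr n M γ A) : ∃ ω, A ω := by
  obtain ⟨ω, -, hω⟩ := exists_ne_zero_of_sum_ne_zero h.ne'
  exact ⟨ω, (ite_ne_right_iff.1 hω).1⟩

end PrefixProbability

theorem private_posterior_independent_of_own_strategy_general
    {X : Type} [Fintype X] {K : ℕ} {Y U : Fin K → Type}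
    [∀ k, Fintype (Y k)] [∀ k, Nonempty (U k)]
    {n T : ℕ} (hT : 1 ≤ T) {M : Kernels X Y U} (hM : M.IsPMF)
    {γ γ' : Strat Y U} (hγ : Causal γ) (hγ' : Causal γ')
    {k : Fin K} (hk : SAdmissible T k (γ k)) (hk' : SAdmissible T k (γ' k))
    (hoff : ∀ j ≠ k, γ j = γ' j) {t : ℕ} (ht : t ≤ n)
    {iy : ℕ → ∀ j, Y j} {iu : ℕ → ∀ j, U j}
    (hp : PosInfo n T M γ k t iy iu) (hp' : PosInfo n T M γ' k t iy iu)
    (x : X) (ly : ℕ → ∀ j, Y j) (lu : ℕ → ∀ j, U j) :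
    Xi n T M γ k t iy iu x ly lu = Xi n T M γ' k t iy iu x ly lu := by
  obtain ⟨ω₀, hω₀⟩ := exists_of_Pr_pos hp
  obtain ⟨ω₀', hω₀'⟩ := exists_of_Pr_pos hp'
  have hrec : ∀ s < t, γ k s iy iu = iu s k := fun _ => hω₀.apply_eq_action hk hT
  have hrec' : ∀ s < t, γ' k s iy iu = iu s k := fun _ => hω₀'.apply_eq_action hk' hT
  have hact : ∀ ω : Traj n X Y, InfoEq T γ k t iy iu ω →
      ∀ s < t, actAt γ ω s = actAt γ' ω s := fun _ h _ => h.actAt_eq hk' hT hoff hrec'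
  exact hM.condPr_congr_of_actAt_eq hγ hγ' ht
    ((isDeterminedUpTo_stateAt_eq t x).and (hγ.isDeterminedUpTo_privOthersEq ly lu))
    (hγ.isDeterminedUpTo_infoEq hT iy iu)
    (fun _ => infoEq_iff_of_off_eq hk hk' hT hoff hrec hrec')
    (fun ω h => and_congr_right fun _ => privOthersEq_congr (fun _ _ => rfl) (hact ω h))
    hact

/-!  STATEMENT 5 (Lemma 3: the private posterior `Ξ_t^k` does not depend on station `k`'s
strategy, only on the realized actions contained in `i_t^k`). -/

/-- For every station `k`, time `t`, fixed strategies `γ^{-k}` of the other stations and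
two strategies `γ^k`, `γ̃^k` of station `k`, if the realization `I_t^k = i_t^k` has
positive probability under both profiles, then the private posteriors coincide:
`ℙ^{γ^k,γ^{-k}}(X_t = x, Λ_t^{-k} = λ | i_t^k) = ℙ^{γ̃^k,γ^{-k}}(X_t = x, Λ_t^{-k} = λ | i_t^k)`
for all `(x, λ)`. -/
theorem private_posterior_independent_of_own_strategy
    {X : Type} [Fintype X] [DecidableEq X] [Nonempty X]
    {K : ℕ} {Y U : Fin K → Type}
    [∀ k, Fintype (Y k)] [∀ k, DecidableEq (Y k)] [∀ k, Nonempty (Y k)]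
    [∀ k, Fintype (U k)] [∀ k, DecidableEq (U k)] [∀ k, Nonempty (U k)]
    (n T : ℕ) (hT : 1 ≤ T) (hTn : T ≤ n)
    (M : Kernels X Y U) (hM : M.IsPMF)
    (γb : Strat Y U) (k : Fin K) (g₁ g₂ : SStrat Y U k)
    (h₁ : Admissible T (updStrat γb k g₁))
    (h₂ : Admissible T (updStrat γb k g₂))
    (t : ℕ) (ht : t ≤ n)
    (iy : ℕ → ∀ j, Y j) (iu : ℕ → ∀ j, U j)
    (hp₁ : PosInfo n T M (updStrat γb k g₁) k t iy iu)
    (hp₂ : PosInfo n T M (updStrat γb k g₂) k t iy iu) :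
    ∀ (x : X) (ly : ℕ → ∀ j, Y j) (lu : ℕ → ∀ j, U j),
      Xi n T M (updStrat γb k g₁) k t iy iu x ly lu =
        Xi n T M (updStrat γb k g₂) k t iy iu x ly lu := by
  exact private_posterior_independent_of_own_strategy_general hT hM h₁.causal h₂.causal
    (h₁.sAdmissible k) (h₂.sAdmissible k) (fun j hj => by simp only [updStrat, dif_neg hj])
    ht hp₁ hp₂

end DelayedSharing
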